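/- arXiv:1809.09814 — 3 statements merged into one kernel-verified Lean document; each statement's English description precedes it below -/
import Mathlib

section
/- Characterization of the dual cone of the SOCP relaxation cone: an n×n real symmetric matrix Y belongs to the dual cone C₂* (with respect to the trace inner product) if and only if there exist 2×2 real symmetric positive semidefinite matrices Hᵢⱼ for all i, j ∈ {1,…,n} such that Y = Σ_{i,j} [eᵢ, eⱼ] Hᵢⱼ [eᵢ, eⱼ]ᵀ, where [eᵢ, eⱼ] is the n×2 matrix whose columns are the standard basis vectors eᵢ and eⱼ. -/
/-!
A symmetric matrix `G` lies in `C₂` exactly when all its principal blocks `[eᵢ, eⱼ]ᵀ G [eᵢ, eⱼ]` are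
positive semidefinite. Since `tr (A H Aᵀ G) = tr (H (Aᵀ G A))` and the positive semidefinite cone
is self-dual, `C₂` is the dual of the cone of the sums `∑ᵢⱼ [eᵢ, eⱼ] Hᵢⱼ [eᵢ, eⱼ]ᵀ`, and by the
bipolar theorem it remains to see that the latter cone is closed.

Closedness holds for the sums `∑ₖ Aₖ Hₖ Aₖᴴ` built from any finite family `A`: writing
`Hₖ = Bₖ Bₖᴴ`, their cone is the image of the linear subspace of families `(Aₖ Bₖ)ₖ` under
`V ↦ ∑ₖ Vₖ Vₖᴴ`, and this map is proper because the trace of `∑ₖ Vₖ Vₖᴴ` is the sum of all the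
`‖(Vₖ)ᵢⱼ‖²`.
-/

open Matrix

noncomputable section

/-- Euclidean (ℓ₂) norm of a finite real vector. -/
def vecNorm {k : ℕ} (u : Fin k → ℝ) : ℝ := Real.sqrt (∑ i, u i ^ 2)

/-- The matrix pencil `p(x, X) = F₀ + ∑ₖ xₖ Kₖ + ∑ᵢ ∑ⱼ Xᵢⱼ Lᵢⱼ`. -/
def pencil {n m : ℕ} (F0 : Matrix (Fin m) (Fin m) ℝ)
    (K : Fin n → Matrix (Fin m) (Fin m) ℝ)
    (L : Fin n → Fin n → Matrix (Fin m) (Fin m) ℝ)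
    (x : Fin n → ℝ) (X : Matrix (Fin n) (Fin n) ℝ) : Matrix (Fin m) (Fin m) ℝ :=
  F0 + ∑ k, x k • K k + ∑ i, ∑ j, X i j • L i j

/-- Negative semidefinite real matrix. -/
def NegSemidef' {k : ℕ} (A : Matrix (Fin k) (Fin k) ℝ) : Prop := (-A).PosSemidef

/-- Negative definite real matrix. -/
def NegDef' {k : ℕ} (A : Matrix (Fin k) (Fin k) ℝ) : Prop := (-A).PosDef

/-- The BMI feasible set `F = {x : p(x, xxᵀ) ⪯ 0}`. -/
def feasSet {n m : ℕ} (F0 : Matrix (Fin m) (Fin m) ℝ)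
    (K : Fin n → Matrix (Fin m) (Fin m) ℝ)
    (L : Fin n → Fin n → Matrix (Fin m) (Fin m) ℝ) : Set (Fin n → ℝ) :=
  {x | NegSemidef' (pencil F0 K L x (vecMulVec x x))}

/-- Feasibility distance `d_F(x) = inf {‖x − a‖₂ : a ∈ F}`. -/
def distF {n m : ℕ} (F0 : Matrix (Fin m) (Fin m) ℝ)
    (K : Fin n → Matrix (Fin m) (Fin m) ℝ)
    (L : Fin n → Fin n → Matrix (Fin m) (Fin m) ℝ) (x : Fin n → ℝ) : ℝ :=
  sInf {r | ∃ a ∈ feasSet F0 K L, r = vecNorm (x - a)}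

/-- `δₖ(x) = 2 ∑ᵢ xᵢ L_{k i}`. -/
def deltaMat {n m : ℕ} (L : Fin n → Fin n → Matrix (Fin m) (Fin m) ℝ)
    (k : Fin n) (x : Fin n → ℝ) : Matrix (Fin m) (Fin m) ℝ :=
  (2 : ℝ) • ∑ i, x i • L k i

/-- The MFCQ condition at a point `x`. -/
def MFCQ {n m : ℕ} (F0 : Matrix (Fin m) (Fin m) ℝ)
    (K : Fin n → Matrix (Fin m) (Fin m) ℝ)
    (L : Fin n → Fin n → Matrix (Fin m) (Fin m) ℝ) (x : Fin n → ℝ) : Prop :=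
  ∃ b : Fin n → ℝ,
    NegDef' (pencil F0 K L x (vecMulVec x x) + ∑ k, b k • (K k + deltaMat L k x))

/-- Smallest eigenvalue of a symmetric real matrix, via the Rayleigh quotient. -/
def lambdaMin {k : ℕ} (A : Matrix (Fin k) (Fin k) ℝ) : ℝ :=
  sInf {r | ∃ u : Fin k → ℝ, vecNorm u = 1 ∧ r = u ⬝ᵥ (A *ᵥ u)}

/-- The G-MFCQ function `s(x)`. -/
def sFun {n m : ℕ} (K : Fin n → Matrix (Fin m) (Fin m) ℝ)
    (L : Fin n → Fin n → Matrix (Fin m) (Fin m) ℝ) (x : Fin n → ℝ) : ℝ :=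
  sSup {r | ∃ b : Fin n → ℝ, vecNorm b = 1 ∧
    r = lambdaMin (-(∑ k, b k • (K k + deltaMat L k x)))}

/-- Spectral norm of a real matrix. -/
def specNorm {k : ℕ} (A : Matrix (Fin k) (Fin k) ℝ) : ℝ :=
  sSup {r | ∃ v : Fin k → ℝ, vecNorm v = 1 ∧ r = vecNorm (A *ᵥ v)}

/-- Pencil norm `‖p‖₂`. -/
def pencilNorm {n m : ℕ} (L : Fin n → Fin n → Matrix (Fin m) (Fin m) ℝ) : ℝ :=
  sSup {r | ∃ u : Fin m → ℝ, vecNorm u = 1 ∧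
    r = specNorm (Matrix.of fun i j => u ⬝ᵥ (L i j *ᵥ u))}

/-- Cone `C₁`: positive semidefinite matrices. -/
def coneC1 (n : ℕ) : Set (Matrix (Fin n) (Fin n) ℝ) := {H | H.PosSemidef}

/-- Cone `C₂`: symmetric matrices with `Hᵢᵢ ≥ 0` and `Hᵢᵢ Hⱼⱼ ≥ Hᵢⱼ²`. -/
def coneC2 (n : ℕ) : Set (Matrix (Fin n) (Fin n) ℝ) :=
  {H | H.IsSymm ∧ ∀ i j, 0 ≤ H i i ∧ H i j ^ 2 ≤ H i i * H j j}

/-- Cone `C₃`: symmetric matrices with `Hᵢᵢ ≥ 0` and `Hᵢᵢ + Hⱼⱼ ≥ 2|Hᵢⱼ|`. -/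
def coneC3 (n : ℕ) : Set (Matrix (Fin n) (Fin n) ℝ) :=
  {H | H.IsSymm ∧ ∀ i j, 0 ≤ H i i ∧ 2 * |H i j| ≤ H i i + H j j}

/-- Dual cone with respect to the trace inner product. -/
def dualCone {n : ℕ} (C : Set (Matrix (Fin n) (Fin n) ℝ)) :
    Set (Matrix (Fin n) (Fin n) ℝ) :=
  {Y | Y.IsSymm ∧ ∀ H ∈ C, 0 ≤ (Y * H).trace}

/-- `α(Λ)` : the n×n matrix with entries `⟨Lᵢⱼ, Λ⟩ = tr(Lᵢⱼ Λ)`. -/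
def alphaMat {n m : ℕ} (L : Fin n → Fin n → Matrix (Fin m) (Fin m) ℝ)
    (Λ : Matrix (Fin m) (Fin m) ℝ) : Matrix (Fin n) (Fin n) ℝ :=
  Matrix.of fun i j => (L i j * Λ).trace

/-- Objective of the penalized problem `(P_η)`. -/
def penObj {n : ℕ} (c xc : Fin n → ℝ) (η : ℝ) (x : Fin n → ℝ) : ℝ :=
  c ⬝ᵥ x + η * vecNorm (x - xc) ^ 2

/-- `x` is an optimal solution of the penalized problem `(P_η)`. -/
def IsOptPen {n m : ℕ} (F0 : Matrix (Fin m) (Fin m) ℝ)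
    (K : Fin n → Matrix (Fin m) (Fin m) ℝ)
    (L : Fin n → Fin n → Matrix (Fin m) (Fin m) ℝ)
    (c xc : Fin n → ℝ) (η : ℝ) (x : Fin n → ℝ) : Prop :=
  x ∈ feasSet F0 K L ∧ ∀ y ∈ feasSet F0 K L, penObj c xc η x ≤ penObj c xc η y

/-- Objective of the penalized convex relaxation `(R_{η,C})`. -/
def relObj {n : ℕ} (c xc : Fin n → ℝ) (η : ℝ) (x : Fin n → ℝ)
    (X : Matrix (Fin n) (Fin n) ℝ) : ℝ :=
  c ⬝ᵥ x + η * (X.trace - 2 * (xc ⬝ᵥ x) + xc ⬝ᵥ xc)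

/-- Feasibility for the relaxation with cone `C`. -/
def RelFeasible {n m : ℕ} (F0 : Matrix (Fin m) (Fin m) ℝ)
    (K : Fin n → Matrix (Fin m) (Fin m) ℝ)
    (L : Fin n → Fin n → Matrix (Fin m) (Fin m) ℝ)
    (C : Set (Matrix (Fin n) (Fin n) ℝ))
    (x : Fin n → ℝ) (X : Matrix (Fin n) (Fin n) ℝ) : Prop :=
  X.IsSymm ∧ NegSemidef' (pencil F0 K L x X) ∧ X - vecMulVec x x ∈ C

/-- `(x, X)` is an optimal solution of the penalized convex relaxation `(R_{η,C})`. -/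
def IsOptRel {n m : ℕ} (F0 : Matrix (Fin m) (Fin m) ℝ)
    (K : Fin n → Matrix (Fin m) (Fin m) ℝ)
    (L : Fin n → Fin n → Matrix (Fin m) (Fin m) ℝ)
    (c xc : Fin n → ℝ) (η : ℝ) (C : Set (Matrix (Fin n) (Fin n) ℝ))
    (x : Fin n → ℝ) (X : Matrix (Fin n) (Fin n) ℝ) : Prop :=
  RelFeasible F0 K L C x X ∧
    ∀ y Y, RelFeasible F0 K L C y Y → relObj c xc η x X ≤ relObj c xc η y Y

/-- The KKT conditions for `(P_η)` at `(x, Λ)`. -/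
def KKT {n m : ℕ} (F0 : Matrix (Fin m) (Fin m) ℝ)
    (K : Fin n → Matrix (Fin m) (Fin m) ℝ)
    (L : Fin n → Fin n → Matrix (Fin m) (Fin m) ℝ)
    (c xc : Fin n → ℝ) (η : ℝ)
    (x : Fin n → ℝ) (Λ : Matrix (Fin m) (Fin m) ℝ) : Prop :=
  Λ.IsSymm ∧ Λ.PosSemidef ∧
  c + (2 * η) • (x - xc) + (∑ k, ((K k * Λ).trace) • (Pi.single k 1 : Fin n → ℝ))
      + (2 : ℝ) • (alphaMat L Λ *ᵥ x) = 0 ∧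
  Λ * pencil F0 K L x (vecMulVec x x) = 0


/-- The n×2 matrix `[eᵢ, eⱼ]` whose columns are standard basis vectors. -/
def basisPair {n : ℕ} (i j : Fin n) : Matrix (Fin n) (Fin 2) ℝ :=
  Matrix.of fun a b =>
    if b = 0 then (if a = i then 1 else 0) else (if a = j then 1 else 0)

open scoped MatrixOrder ComplexOrder

section CongruenceCone

variable {𝕜 ι κ τ : Type*} [RCLike 𝕜] [Fintype κ] [Fintype τ]

theorem posSemidef_iff_exists_eq_mul_conjTranspose_self {H : Matrix τ τ 𝕜} :
    H.PosSemidef ↔ ∃ B : Matrix τ τ 𝕜, H = B * Bᴴ := by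
  classical
  rw [← nonneg_iff_posSemidef, CStarAlgebra.nonneg_iff_eq_mul_star_self]
  rfl

theorem posSemidef_iff_forall_re_trace_mul_nonneg {M : Matrix τ τ 𝕜} (hM : M.IsHermitian) :
    M.PosSemidef ↔ ∀ H : Matrix τ τ 𝕜, H.PosSemidef → 0 ≤ RCLike.re (H * M).trace := by
  constructor
  · intro hM H hH
    obtain ⟨B, rfl⟩ := posSemidef_iff_exists_eq_mul_conjTranspose_self.1 hH
    rw [Matrix.mul_assoc, trace_mul_comm]
    exact (RCLike.nonneg_iff.1 (hM.conjTranspose_mul_mul_same B).trace_nonneg).1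
  · intro h
    refine .of_dotProduct_mulVec_nonneg hM fun x => ?_
    have hx := h _ (posSemidef_vecMulVec_self_star x)
    rw [vecMulVec_mul, trace_vecMulVec, dotProduct_comm, ← dotProduct_mulVec] at hx
    exact RCLike.nonneg_iff.2 ⟨hx, hM.im_star_dotProduct_mulVec_self x⟩

theorem posSemidef_fin_two_iff {M : Matrix (Fin 2) (Fin 2) 𝕜} (hM : M.IsHermitian) :
    M.PosSemidef ↔ 0 ≤ M.trace ∧ 0 ≤ M.det := by
  refine ⟨fun h => ⟨h.trace_nonneg, h.det_nonneg⟩, fun ⟨htr, hdet⟩ => ?_⟩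
  rw [hM.trace_eq_sum_eigenvalues, Fin.sum_univ_two] at htr
  rw [hM.det_eq_prod_eigenvalues, Fin.prod_univ_two] at hdet
  norm_cast at htr hdet
  rw [hM.posSemidef_iff_eigenvalues_nonneg, Pi.le_def, Fin.forall_fin_two]
  constructor <;> simp only [Pi.zero_apply] <;> nlinarith

/-- The convex cone of the matrices `∑ₖ Aₖ Hₖ Aₖᴴ` with positive semidefinite blocks `Hₖ`. The
scalars of the cone are real also when the matrices are complex. -/
def congrCone (A : κ → Matrix ι τ 𝕜) : PointedCone ℝ (Matrix ι ι 𝕜) where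
  carrier := {Y | ∃ H : κ → Matrix τ τ 𝕜,
    (∀ k, (H k).PosSemidef) ∧ Y = ∑ k, A k * H k * (A k)ᴴ}
  add_mem' := by
    rintro _ _ ⟨H, hH, rfl⟩ ⟨K, hK, rfl⟩
    exact ⟨H + K, fun k => (hH k).add (hK k),
      by simp [Matrix.mul_add, Matrix.add_mul, Finset.sum_add_distrib]⟩
  zero_mem' := ⟨0, fun _ => .zero, by simp⟩
  smul_mem' := by
    rintro c _ ⟨H, hH, rfl⟩
    exact ⟨c • H, fun k => (hH k).smul c.2, by simp [Finset.smul_sum]⟩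

theorem isHermitian_of_mem_congrCone {A : κ → Matrix ι τ 𝕜} {Y : Matrix ι ι 𝕜}
    (hY : Y ∈ congrCone A) : Y.IsHermitian := by
  obtain ⟨H, hH, rfl⟩ := hY
  exact isSelfAdjoint_sum Finset.univ fun k _ =>
    isHermitian_mul_mul_conjTranspose (A k) (hH k).isHermitian

theorem congrCone_eq_image_range (A : κ → Matrix ι τ 𝕜) :
    (congrCone A : Set (Matrix ι ι 𝕜)) =
      (fun V => ∑ k, V k * (V k)ᴴ) ''
        Set.range fun (B : κ → Matrix τ τ 𝕜) k => A k * B k := by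
  have hgram (B : κ → Matrix τ τ 𝕜) :
      ∑ k, A k * B k * (A k * B k)ᴴ = ∑ k, A k * (B k * (B k)ᴴ) * (A k)ᴴ := by
    simp only [conjTranspose_mul, Matrix.mul_assoc]
  rw [← Set.range_comp]
  ext Y
  constructor
  · rintro ⟨H, hH, rfl⟩
    choose B hB using fun k => posSemidef_iff_exists_eq_mul_conjTranspose_self.1 (hH k)
    obtain rfl : H = fun k => B k * (B k)ᴴ := funext hB
    exact ⟨B, hgram B⟩
  · rintro ⟨B, rfl⟩
    exact ⟨_, fun k => posSemidef_self_mul_conjTranspose (B k), hgram B⟩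

theorem pi_norm_sq_le_sum_norm_sq {E : κ → Type*} [∀ k, SeminormedAddCommGroup (E k)]
    (v : ∀ k, E k) : ‖v‖ ^ 2 ≤ ∑ k, ‖v k‖ ^ 2 := by
  have hsum : 0 ≤ ∑ k, ‖v k‖ ^ 2 := by positivity
  rw [← Real.le_sqrt (norm_nonneg v) hsum, pi_norm_le_iff_of_nonneg (Real.sqrt_nonneg _)]
  exact fun k => Real.le_sqrt_of_sq_le <|
    Finset.single_le_sum (f := fun k => ‖v k‖ ^ 2) (fun _ _ => by positivity) (Finset.mem_univ k)

theorem re_trace_mul_conjTranspose_self [Fintype ι] (V : Matrix ι τ 𝕜) :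
    RCLike.re (V * Vᴴ).trace = ∑ i, ∑ j, ‖V i j‖ ^ 2 := by
  simp only [trace, diag_apply, mul_apply, conjTranspose_apply, RCLike.star_def, RCLike.mul_conj,
    map_sum]
  norm_cast

theorem isProperMap_sum_mul_conjTranspose_self [Finite ι] :
    IsProperMap fun V : κ → Matrix ι τ 𝕜 => ∑ k, V k * (V k)ᴴ := by
  have := Fintype.ofFinite ι
  have hsq : IsProperMap fun V : κ → ι → τ → 𝕜 => ∑ k, ∑ i, ∑ j, ‖V k i j‖ ^ 2 := by
    have hle (V : κ → ι → τ → 𝕜) : ‖V‖ ^ 2 ≤ ∑ k, ∑ i, ∑ j, ‖V k i j‖ ^ 2 :=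
      (pi_norm_sq_le_sum_norm_sq V).trans <| Finset.sum_le_sum fun k _ =>
        (pi_norm_sq_le_sum_norm_sq (V k)).trans <| Finset.sum_le_sum fun i _ =>
          pi_norm_sq_le_sum_norm_sq (V k i)
    refine isProperMap_iff_tendsto_cocompact.2 ⟨by fun_prop, ?_⟩
    exact (Filter.tendsto_atTop_mono hle <| (Filter.tendsto_pow_atTop two_ne_zero).comp
      tendsto_norm_cocompact_atTop).mono_right atTop_le_cocompact
  have htrace : (fun Z : Matrix ι ι 𝕜 => RCLike.re Z.trace) ∘
      (fun V : κ → Matrix ι τ 𝕜 => ∑ k, V k * (V k)ᴴ) =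
        fun V => ∑ k, ∑ i, ∑ j, ‖V k i j‖ ^ 2 := by
    funext V
    simp only [Function.comp_apply, trace_sum, map_sum, re_trace_mul_conjTranspose_self]
  exact isProperMap_of_comp_of_t2 (by fun_prop) (by fun_prop) (htrace ▸ hsq)

theorem isClosed_congrCone [Finite ι] (A : κ → Matrix ι τ 𝕜) :
    IsClosed (congrCone A : Set (Matrix ι ι 𝕜)) := by
  let L : (κ → Matrix τ τ 𝕜) →ₗ[𝕜] κ → Matrix ι τ 𝕜 :=
    LinearMap.pi fun k => mulLeftLinearMap τ 𝕜 (A k) ∘ₗ LinearMap.proj k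
  rw [congrCone_eq_image_range]
  exact isProperMap_sum_mul_conjTranspose_self.isClosedMap _
    (Submodule.closed_of_finiteDimensional (LinearMap.range L))

variable [Fintype ι]

theorem exists_forall_eq_re_trace_mul (f : Module.Dual ℝ (Matrix ι ι 𝕜)) :
    ∃ G : Matrix ι ι 𝕜, ∀ Z, f Z = RCLike.re (Z * G).trace := by
  let T : Matrix ι ι 𝕜 →ₗ[ℝ] Module.Dual ℝ (Matrix ι ι 𝕜) :=
    (LinearMap.mul ℝ (Matrix ι ι 𝕜)).flip.compr₂ (RCLike.reLm ∘ₗ traceLinearMap ι ℝ 𝕜)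
  have hT : Function.Injective T := by
    refine (injective_iff_map_eq_zero T).2 fun G hG => ?_
    have hre : RCLike.re (Gᴴ * G).trace = 0 := LinearMap.congr_fun hG Gᴴ
    have him : RCLike.im (Gᴴ * G).trace = 0 :=
      (RCLike.nonneg_iff.1 (posSemidef_conjTranspose_mul_self G).trace_nonneg).2
    exact trace_conjTranspose_mul_self_eq_zero_iff.1 <|
      RCLike.ext (hre.trans (map_zero _).symm) (him.trans (map_zero _).symm)
  obtain ⟨G, hG⟩ := (LinearMap.injective_iff_surjective_of_finrank_eq_finrank
    Subspace.dual_finrank_eq.symm).1 hT f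
  exact ⟨G, fun Z => (LinearMap.congr_fun hG Z).symm⟩

theorem exists_isHermitian_forall_eq_re_trace_mul (f : Module.Dual ℝ (Matrix ι ι 𝕜)) :
    ∃ G : Matrix ι ι 𝕜, G.IsHermitian ∧
      ∀ Z : Matrix ι ι 𝕜, Z.IsHermitian → f Z = RCLike.re (Z * G).trace := by
  obtain ⟨G, hG⟩ := exists_forall_eq_re_trace_mul f
  refine ⟨(2⁻¹ : ℝ) • (G + Gᴴ), ?_, fun Z hZ => ?_⟩
  · exact (isHermitian_add_transpose_self G).smul (IsSelfAdjoint.all _)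
  · have hstar : RCLike.re (Z * Gᴴ).trace = RCLike.re (Z * G).trace := by
      rw [← hZ.eq, ← conjTranspose_mul, trace_conjTranspose, hZ.eq, trace_mul_comm,
        RCLike.star_def, RCLike.conj_re]
    rw [hG, Matrix.mul_smul, trace_smul, RCLike.smul_re, Matrix.mul_add, trace_add, map_add, hstar]
    ring

theorem forall_posSemidef_conjTranspose_mul_mul_iff {A : κ → Matrix ι τ 𝕜} {G : Matrix ι ι 𝕜}
    (hG : G.IsHermitian) :
    (∀ k, ((A k)ᴴ * G * A k).PosSemidef) ↔ ∀ Y ∈ congrCone A, 0 ≤ RCLike.re (Y * G).trace := by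
  classical
  have htrace (H : κ → Matrix τ τ 𝕜) : RCLike.re ((∑ k, A k * H k * (A k)ᴴ) * G).trace =
      ∑ k, RCLike.re (H k * ((A k)ᴴ * G * A k)).trace := by
    rw [Finset.sum_mul, trace_sum, map_sum]
    refine Finset.sum_congr rfl fun k _ => ?_
    rw [Matrix.mul_assoc, Matrix.mul_assoc, trace_mul_comm, Matrix.mul_assoc, Matrix.mul_assoc]
  simp only [posSemidef_iff_forall_re_trace_mul_nonneg (isHermitian_conjTranspose_mul_mul _ hG)]
  constructor
  · rintro h _ ⟨H, hH, rfl⟩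
    rw [htrace]
    exact Finset.sum_nonneg fun k _ => h k (H k) (hH k)
  · intro h k H hH
    have hsingle (l : κ) : ((Pi.single k H : κ → Matrix τ τ 𝕜) l).PosSemidef := by
      obtain rfl | hl := eq_or_ne l k
      · rwa [Pi.single_eq_same]
      · rw [Pi.single_eq_of_ne hl]
        exact .zero
    have hk := h _ ⟨_, hsingle, rfl⟩
    rw [htrace, Finset.sum_eq_single_of_mem k (Finset.mem_univ k), Pi.single_eq_same] at hk
    · exact hk
    · intro l _ hl
      rw [Pi.single_eq_of_ne hl, Matrix.zero_mul, trace_zero, map_zero]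

theorem mem_congrCone_iff {A : κ → Matrix ι τ 𝕜} {Y : Matrix ι ι 𝕜} (hY : Y.IsHermitian) :
    Y ∈ congrCone A ↔ ∀ G : Matrix ι ι 𝕜, G.IsHermitian →
      (∀ k, ((A k)ᴴ * G * A k).PosSemidef) → 0 ≤ RCLike.re (Y * G).trace := by
  refine ⟨fun hYA G hG hGA => (forall_posSemidef_conjTranspose_mul_mul_iff hG).1 hGA Y hYA,
    fun h => ?_⟩
  have : LocallyConvexSpace ℝ (Matrix ι ι 𝕜) :=
    inferInstanceAs (LocallyConvexSpace ℝ (ι → ι → 𝕜))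
  let C : ProperCone ℝ (Matrix ι ι 𝕜) := ⟨congrCone A, isClosed_congrCone A⟩
  by_contra hYC
  obtain ⟨f, hf, hfY⟩ := C.hyperplane_separation_point (x₀ := Y) hYC
  obtain ⟨G, hG, hfG⟩ := exists_isHermitian_forall_eq_re_trace_mul f.toLinearMap
  have hGA : ∀ k, ((A k)ᴴ * G * A k).PosSemidef :=
    (forall_posSemidef_conjTranspose_mul_mul_iff hG).2 fun Z hZ => by
      rw [← hfG Z (isHermitian_of_mem_congrCone hZ)]
      exact hf Z hZ
  exact hfY.not_ge ((h G hG hGA).trans_eq (hfG Y hY).symm)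

end CongruenceCone

section ConeC2

theorem posSemidef_submatrix_pair_iff {ι : Type*} {G : Matrix ι ι ℝ}
    (hG : G.IsSymm) (i j : ι) : (G.submatrix ![i, j] ![i, j]).PosSemidef ↔
      0 ≤ G i i + G j j ∧ G i j ^ 2 ≤ G i i * G j j := by
  rw [posSemidef_fin_two_iff (isHermitian_iff_isSymm.2 (hG.submatrix _)), trace_fin_two,
    det_fin_two]
  simp [hG.apply i j, sq]

variable {n : ℕ}

theorem transpose_basisPair_mul_mul_basisPair (G : Matrix (Fin n) (Fin n) ℝ) (i j : Fin n) :
    (basisPair i j)ᵀ * G * basisPair i j = G.submatrix ![i, j] ![i, j] := by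
  ext a b
  fin_cases a <;> fin_cases b <;> simp [basisPair, mul_apply]

theorem mem_coneC2_iff {G : Matrix (Fin n) (Fin n) ℝ} :
    G ∈ coneC2 n ↔
      G.IsSymm ∧ ∀ i j : Fin n, ((basisPair i j)ᵀ * G * basisPair i j).PosSemidef := by
  refine and_congr_right fun hG => ?_
  simp only [transpose_basisPair_mul_mul_basisPair, posSemidef_submatrix_pair_iff hG]
  constructor
  · exact fun h i j => ⟨add_nonneg (h i i).1 (h j j).1, (h i j).2⟩
  · exact fun h i j => ⟨by linarith [(h i i).1], (h i j).2⟩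

end ConeC2

theorem bmi_dual_cone_socp {n : ℕ} (hn : 0 < n)
    (Y : Matrix (Fin n) (Fin n) ℝ) (hY : Y.IsSymm) :
    Y ∈ dualCone (coneC2 n) ↔
      ∃ H : Fin n → Fin n → Matrix (Fin 2) (Fin 2) ℝ,
        (∀ i j, (H i j).PosSemidef) ∧
        Y = ∑ i, ∑ j, basisPair i j * H i j * (basisPair i j)ᵀ := by
  let A (k : Fin n × Fin n) : Matrix (Fin n) (Fin 2) ℝ := basisPair k.1 k.2
  calc Y ∈ dualCone (coneC2 n)
      ↔ ∀ G : Matrix (Fin n) (Fin n) ℝ, G.IsHermitian →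
          (∀ k, ((A k)ᴴ * G * A k).PosSemidef) → 0 ≤ RCLike.re (Y * G).trace := by
        simp [dualCone, hY, mem_coneC2_iff, A]
    _ ↔ Y ∈ congrCone A := (mem_congrCone_iff (isHermitian_iff_isSymm.2 hY)).symm
    _ ↔ _ := (Equiv.curry _ _ _).exists_congr fun H => by
        simp [Fintype.sum_prod_type, A, Equiv.curry]
end
end

section
/- Characterization of the dual cone of the parabolic relaxation cone: an n×n real symmetric matrix Y belongs to the dual cone C₃* (with respect to the trace inner product) if and only if Y is diagonally dominant with nonnegative diagonal, i.e., Yᵢᵢ ≥ Σ_{j≠i} |Yᵢⱼ| for every i ∈ {1,…,n}. -/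
/-!
Every `H ∈ C₃` satisfies `2 Yᵢⱼ Hᵢⱼ ≥ -|Yᵢⱼ| (Hᵢᵢ + Hⱼⱼ)` for `i ≠ j`. As `|Y|` is symmetric, both
halves of the right-hand side have the same sum, so
`tr (Y H) ≥ ∑ᵢ Hᵢᵢ (Yᵢᵢ - ∑_{j ≠ i} |Yᵢⱼ|)`. Conversely, the `i`-th coefficient
`Yᵢᵢ - ∑_{j ≠ i} |Yᵢⱼ|` is half the trace pairing of `Y` with the matrix `a eᵢᵀ + eᵢ aᵀ` of `C₃`,
where `aᵢ = 1` and `aⱼ = -sign Yᵢⱼ` for `j ≠ i`.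
-/

open Matrix

noncomputable section

section General

variable {ι R : Type*}

/-- The parabolic relaxation cone `C₃` over an arbitrary index type and ordered ring;
`coneC3 n` is `parabolicCone (Fin n) ℝ` by definition. -/
def parabolicCone (ι R : Type*) [Ring R] [LinearOrder R] : Set (Matrix ι ι R) :=
  {H | H.IsSymm ∧ ∀ i j, 0 ≤ H i i ∧ 2 * |H i j| ≤ H i i + H j j}

lemma trace_mul_add_transpose_self [Fintype ι] [CommRing R] {Y : Matrix ι ι R} (hY : Y.IsSymm)
    (B : Matrix ι ι R) : (Y * (B + Bᵀ)).trace = 2 * (Y * B).trace := by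
  have htranspose : (Y * Bᵀ).trace = (Y * B).trace := by
    rw [← trace_transpose, transpose_mul, transpose_transpose, hY.eq, trace_mul_comm]
  rw [mul_add, trace_add, htranspose, two_mul]

variable [DecidableEq ι]

/-- The symmetric matrix `a eᵢᵀ + eᵢ aᵀ`, the test matrix for the `i`-th row. -/
def crossMatrix [Semiring R] (i : ι) (a : ι → R) : Matrix ι ι R :=
  vecMulVec a (Pi.single i 1) + (vecMulVec a (Pi.single i 1))ᵀ

lemma crossMatrix_mem_parabolicCone [CommRing R] [LinearOrder R] [IsStrictOrderedRing R]
    {i : ι} {a : ι → R} (hai : a i = 1) (ha : ∀ j, |a j| ≤ 1) :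
    crossMatrix i a ∈ parabolicCone ι R := by
  set e : ι → R := Pi.single i 1 with he
  have he_nonneg : 0 ≤ e := Pi.single_nonneg.2 zero_le_one
  have hentry (j k : ι) : crossMatrix i a j k = a j * e k + a k * e j := rfl
  have hdiag (j : ι) : crossMatrix i a j j = 2 * e j := by
    obtain rfl | hji := eq_or_ne j i
    · rw [hentry, hai, one_mul, two_mul]
    · rw [hentry, he, Pi.single_eq_of_ne hji, mul_zero, mul_zero, add_zero]
  have hbound (j k : ι) : |a j * e k| ≤ e k := by
    rw [abs_mul, abs_of_nonneg (he_nonneg k)]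
    exact mul_le_of_le_one_left (he_nonneg k) (ha j)
  refine ⟨isSymm_add_transpose_self _, fun j k => ⟨?_, ?_⟩⟩
  · rw [hdiag]
    exact mul_nonneg zero_le_two (he_nonneg j)
  · rw [hdiag, hdiag, hentry]
    linarith [abs_add_le (a j * e k) (a k * e j), hbound j k, hbound k j]

/-- The vector `a` with `aᵢ = 1` and `aⱼ = -sign Yᵢⱼ` for `j ≠ i`. Among the vectors with `aᵢ = 1`
and entries in `[-1, 1]`, it minimizes the `i`-th entry of `Y a`. -/
def rowSignVector [Ring R] [LinearOrder R] (Y : Matrix ι ι R) (i : ι) : ι → R :=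
  Function.update (fun j => -(SignType.sign (Y i j) : R)) i 1

lemma rowSignVector_self [Ring R] [LinearOrder R] (Y : Matrix ι ι R) (i : ι) :
    rowSignVector Y i i = 1 :=
  Function.update_self ..

lemma abs_rowSignVector_le_one [Ring R] [LinearOrder R] [IsStrictOrderedRing R]
    (Y : Matrix ι ι R) (i j : ι) : |rowSignVector Y i j| ≤ 1 := by
  obtain rfl | hji := eq_or_ne j i
  · rw [rowSignVector_self, abs_one]
  · rw [rowSignVector, Function.update_of_ne hji, abs_neg]
    cases SignType.sign (Y i j) <;> simp

variable [Fintype ι]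

lemma trace_mul_crossMatrix [CommRing R] {Y : Matrix ι ι R} (hY : Y.IsSymm) (i : ι) (a : ι → R) :
    (Y * crossMatrix i a).trace = 2 * (Y *ᵥ a) i := by
  rw [crossMatrix, trace_mul_add_transpose_self hY, mul_vecMulVec, trace_vecMulVec,
    dotProduct_single_one]

lemma sum_sum_erase_mul_add [NonAssocSemiring R] {W : ι → ι → R} (hW : ∀ i j, W i j = W j i)
    (d : ι → R) :
    ∑ i, ∑ j ∈ Finset.univ.erase i, W i j * (d i + d j) =
      2 * ∑ i, (∑ j ∈ Finset.univ.erase i, W i j) * d i := by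
  have hswap : ∑ i, ∑ j ∈ Finset.univ.erase i, W i j * d j =
      ∑ i, ∑ j ∈ Finset.univ.erase i, W i j * d i := by
    rw [Finset.sum_comm' (t' := Finset.univ) (s' := Finset.univ.erase) (by simp [ne_comm])]
    simp only [hW]
  simp only [mul_add, Finset.sum_add_distrib, hswap, Finset.sum_mul, two_mul]

/-- The amount `Yᵢᵢ - ∑_{j ≠ i} |Yᵢⱼ|` by which the diagonal entry dominates the `i`-th row;
diagonal dominance is its nonnegativity in every row. -/
def dominanceGap [Ring R] [LinearOrder R] (Y : Matrix ι ι R) (i : ι) : R :=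
  Y i i - ∑ j ∈ Finset.univ.erase i, |Y i j|

lemma dominanceGap_nonneg_iff [Ring R] [LinearOrder R] [IsStrictOrderedRing R]
    {Y : Matrix ι ι R} {i : ι} :
    0 ≤ dominanceGap Y i ↔ ∑ j ∈ Finset.univ.erase i, |Y i j| ≤ Y i i :=
  sub_nonneg

lemma mulVec_rowSignVector [Ring R] [LinearOrder R] [IsStrictOrderedRing R]
    (Y : Matrix ι ι R) (i : ι) :
    (Y *ᵥ rowSignVector Y i) i = dominanceGap Y i := by
  rw [mulVec, dotProduct, ← Finset.add_sum_erase _ _ (Finset.mem_univ i), dominanceGap,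
    sub_eq_add_neg, ← Finset.sum_neg_distrib]
  congr 1
  · rw [rowSignVector_self, mul_one]
  · refine Finset.sum_congr rfl fun j hj => ?_
    rw [rowSignVector, Function.update_of_ne (Finset.ne_of_mem_erase hj), mul_neg, self_mul_sign]

variable [CommRing R] [LinearOrder R] [IsStrictOrderedRing R]

lemma sum_dominanceGap_mul_diag_le_trace_mul {Y H : Matrix ι ι R} (hY : Y.IsSymm)
    (hH : H ∈ parabolicCone ι R) :
    ∑ i, dominanceGap Y i * H i i ≤ (Y * H).trace := by
  have hentry (i j : ι) : -(|Y i j| * (H i i + H j j)) ≤ 2 * (Y i j * H i j) := by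
    have hmul := mul_le_mul_of_nonneg_left (hH.2 i j).2 (abs_nonneg (Y i j))
    have habs := neg_abs_le (Y i j * H i j)
    rw [abs_mul] at habs
    linarith
  refine le_of_mul_le_mul_left ?_ (zero_lt_two' R)
  calc
    2 * ∑ i, dominanceGap Y i * H i i
      = 2 * ∑ i, Y i i * H i i - 2 * ∑ i, (∑ j ∈ Finset.univ.erase i, |Y i j|) * H i i := by
        simp only [dominanceGap, sub_mul, Finset.sum_sub_distrib, mul_sub]
    _ = ∑ i, (2 * (Y i i * H i i) + ∑ j ∈ Finset.univ.erase i, -(|Y i j| * (H i i + H j j))) := by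
        rw [← sum_sum_erase_mul_add fun i j => congrArg abs (hY.apply j i)]
        simp only [Finset.sum_add_distrib, Finset.sum_neg_distrib, Finset.mul_sum, sub_eq_add_neg]
    _ ≤ ∑ i, (2 * (Y i i * H i i) + ∑ j ∈ Finset.univ.erase i, 2 * (Y i j * H i j)) := by
        gcongr with i _ j
        exact hentry i j
    _ = ∑ i, ∑ j, 2 * (Y i j * H i j) :=
        Finset.sum_congr rfl fun i _ =>
          Finset.add_sum_erase _ (fun j => 2 * (Y i j * H i j)) (Finset.mem_univ i)
    _ = 2 * ∑ i, ∑ j, (Y ⊙ H) i j := by simp only [Finset.mul_sum, hadamard_apply]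
    _ = 2 * (Y * H).trace := by rw [sum_hadamard_eq, hH.1.eq]

theorem bmi_dual_cone_parabolic_general (Y : Matrix ι ι R) (hY : Y.IsSymm) :
    (∀ H ∈ parabolicCone ι R, 0 ≤ (Y * H).trace) ↔
      ∀ i, ∑ j ∈ Finset.univ.erase i, |Y i j| ≤ Y i i := by
  simp only [← dominanceGap_nonneg_iff]
  refine ⟨fun hdual i => ?_, fun hgap H hH => ?_⟩
  · have htrace := hdual _ <| crossMatrix_mem_parabolicCone
      (rowSignVector_self Y i) (abs_rowSignVector_le_one Y i)
    rw [trace_mul_crossMatrix hY, mulVec_rowSignVector] at htrace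
    exact nonneg_of_mul_nonneg_right htrace zero_lt_two
  · exact (Finset.sum_nonneg fun i _ => mul_nonneg (hgap i) (hH.2 i i).1).trans
      (sum_dominanceGap_mul_diag_le_trace_mul hY hH)

end General

theorem bmi_dual_cone_parabolic {n : ℕ} (hn : 0 < n)
    (Y : Matrix (Fin n) (Fin n) ℝ) (hY : Y.IsSymm) :
    Y ∈ dualCone (coneC3 n) ↔
      ∀ i, ∑ j ∈ Finset.univ.erase i, |Y i j| ≤ Y i i :=
  (and_iff_right hY).trans (bmi_dual_cone_parabolic_general Y hY)
end
end

section
/- Trace bound from the KKT conditions: let η > 0, let x* ∈ F, and let Λ be an m×m real symmetric positive semidefinite matrix such that (x*, Λ) satisfies the KKT conditions for (P_η). Then tr(Λ) · s(x*) ≤ ‖c‖₂ + 2η ‖x* − x̌‖₂. -/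
/-!
Let `g` be the gradient of the objective at `x`. Stationarity says that
`gₖ = -tr((Kₖ + δₖ(x)) Λ)`, so every unit vector `b` satisfies `tr(A_b Λ) = b ⬝ g ≤ ‖g‖` with
`A_b = -∑ₖ bₖ (Kₖ + δₖ(x))`. The quadratic form of `A_b - λ_min(A_b) I` is nonnegative, so its trace
against `Λ ⪰ 0` is nonnegative as well, that is, `tr Λ · λ_min(A_b) ≤ tr(A_b Λ)`. Now take the
supremum over `b`. For `(P_η)` the gradient is `c + 2η(x - x̌)`.
-/

open Matrix

noncomputable section

section VecNorm

variable {k : ℕ}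

lemma vecNorm_eq_norm_toLp (u : Fin k → ℝ) : vecNorm u = ‖WithLp.toLp 2 u‖ := by
  simp [vecNorm, EuclideanSpace.norm_eq]

lemma vecNorm_add_le (u v : Fin k → ℝ) : vecNorm (u + v) ≤ vecNorm u + vecNorm v := by
  simpa only [vecNorm_eq_norm_toLp, WithLp.toLp_add] using norm_add_le _ _

lemma vecNorm_smul (t : ℝ) (u : Fin k → ℝ) : vecNorm (t • u) = |t| * vecNorm u := by
  simp only [vecNorm_eq_norm_toLp, WithLp.toLp_smul, norm_smul, Real.norm_eq_abs]

lemma vecNorm_add_smul_le {t : ℝ} (ht : 0 ≤ t) (u v : Fin k → ℝ) :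
    vecNorm (u + t • v) ≤ vecNorm u + t * vecNorm v := by
  simpa only [vecNorm_smul, abs_of_nonneg ht] using vecNorm_add_le u (t • v)

lemma vecNorm_eq_zero {u : Fin k → ℝ} : vecNorm u = 0 ↔ u = 0 := by
  simp [vecNorm_eq_norm_toLp]

lemma vecNorm_single_one (i : Fin k) : vecNorm (Pi.single i 1) = 1 := by
  simp [vecNorm_eq_norm_toLp]

lemma vecNorm_sq (u : Fin k → ℝ) : vecNorm u ^ 2 = u ⬝ᵥ u := by
  rw [vecNorm_eq_norm_toLp, EuclideanSpace.real_norm_sq_eq]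
  simp only [dotProduct, sq]

lemma dotProduct_le_vecNorm_mul_vecNorm (u v : Fin k → ℝ) : u ⬝ᵥ v ≤ vecNorm u * vecNorm v :=
  Real.sum_mul_le_sqrt_mul_sqrt Finset.univ u v

end VecNorm

section LambdaMin

variable {k : ℕ} (A : Matrix (Fin k) (Fin k) ℝ)

lemma bddBelow_quadraticForm_unitSphere :
    BddBelow {r | ∃ u : Fin k → ℝ, vecNorm u = 1 ∧ r = u ⬝ᵥ (A *ᵥ u)} := by
  have hcont : Continuous fun v : EuclideanSpace ℝ (Fin k) ↦ v.ofLp ⬝ᵥ (A *ᵥ v.ofLp) := by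
    fun_prop
  refine ((isCompact_sphere 0 1).bddBelow_image hcont.continuousOn).mono ?_
  rintro _ ⟨u, hu, rfl⟩
  exact ⟨WithLp.toLp 2 u, by simpa [vecNorm_eq_norm_toLp] using hu, rfl⟩

lemma lambdaMin_le_of_vecNorm_eq_one {u : Fin k → ℝ} (hu : vecNorm u = 1) :
    lambdaMin A ≤ u ⬝ᵥ (A *ᵥ u) :=
  csInf_le (bddBelow_quadraticForm_unitSphere A) ⟨u, hu, rfl⟩

lemma lambdaMin_mul_dotProduct_self_le (u : Fin k → ℝ) :
    lambdaMin A * (u ⬝ᵥ u) ≤ u ⬝ᵥ (A *ᵥ u) := by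
  rcases eq_or_ne u 0 with rfl | hu
  · simp
  have hpos : 0 < vecNorm u := (Real.sqrt_nonneg _).lt_of_ne' (vecNorm_eq_zero.not.mpr hu)
  have hunit : vecNorm ((vecNorm u)⁻¹ • u) = 1 := by
    rw [vecNorm_smul, abs_of_pos (inv_pos.mpr hpos), inv_mul_cancel₀ hpos.ne']
  calc lambdaMin A * (u ⬝ᵥ u)
    _ ≤ ((vecNorm u)⁻¹ • u) ⬝ᵥ (A *ᵥ ((vecNorm u)⁻¹ • u)) * (u ⬝ᵥ u) := by
        rw [← vecNorm_sq]
        gcongr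
        exact lambdaMin_le_of_vecNorm_eq_one A hunit
    _ = u ⬝ᵥ (A *ᵥ u) := by
        rw [← vecNorm_sq, mulVec_smul, smul_dotProduct, dotProduct_smul, smul_eq_mul, smul_eq_mul]
        field_simp

end LambdaMin

section Trace

open scoped ComplexOrder in
lemma trace_mul_nonneg_of_posSemidef {𝕜 ι : Type*} [RCLike 𝕜] [Fintype ι] {A Λ : Matrix ι ι 𝕜}
    (hA : ∀ v, 0 ≤ star v ⬝ᵥ (A *ᵥ v)) (hΛ : Λ.PosSemidef) : 0 ≤ (A * Λ).trace := by
  obtain ⟨d, v, rfl⟩ := posSemidef_iff_eq_sum_vecMulVec.mp hΛ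
  simp only [Finset.mul_sum, trace_sum, mul_vecMulVec, trace_vecMulVec]
  exact Finset.sum_nonneg fun i _ ↦ dotProduct_comm (star (v i)) _ ▸ hA (v i)

lemma trace_mul_lambdaMin_le {k : ℕ} (A : Matrix (Fin k) (Fin k) ℝ) {Λ : Matrix (Fin k) (Fin k) ℝ}
    (hΛ : Λ.PosSemidef) : Λ.trace * lambdaMin A ≤ (A * Λ).trace := by
  have hshift : 0 ≤ ((A - lambdaMin A • 1) * Λ).trace := by
    refine trace_mul_nonneg_of_posSemidef (fun v ↦ ?_) hΛ
    simpa [sub_mulVec, smul_mulVec] using lambdaMin_mul_dotProduct_self_le A v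
  simpa [sub_mul, mul_comm] using hshift

lemma trace_sum_smul_mul {R ι κ μ : Type*} [Semiring R] [Fintype ι] [Fintype κ] [Fintype μ]
    (b : ι → R) (M : ι → Matrix κ μ R) (Λ : Matrix μ κ R) :
    ((∑ i, b i • M i) * Λ).trace = b ⬝ᵥ fun i ↦ (M i * Λ).trace := by
  simp [Matrix.sum_mul, trace_sum, dotProduct]

end Trace

section Stationarity

variable {n m : ℕ} {K : Fin n → Matrix (Fin m) (Fin m) ℝ}
  {L : Fin n → Fin n → Matrix (Fin m) (Fin m) ℝ} {g x : Fin n → ℝ} {Λ : Matrix (Fin m) (Fin m) ℝ}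

/-- The stationarity part of the KKT conditions at `(x, Λ)` for minimizing over the BMI feasible set
an objective whose gradient at `x` is `g`. For `(P_η)` this gradient is `c + 2η(x - x̌)`. -/
def KKTStationary (K : Fin n → Matrix (Fin m) (Fin m) ℝ)
    (L : Fin n → Fin n → Matrix (Fin m) (Fin m) ℝ) (g x : Fin n → ℝ)
    (Λ : Matrix (Fin m) (Fin m) ℝ) : Prop :=
  g + ∑ k, (K k * Λ).trace • (Pi.single k 1 : Fin n → ℝ) + (2 : ℝ) • (alphaMat L Λ *ᵥ x) = 0

variable (L x Λ) in
lemma trace_deltaMat_mul (k : Fin n) :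
    (deltaMat L k x * Λ).trace = 2 * (alphaMat L Λ *ᵥ x) k := by
  rw [deltaMat, smul_mul, trace_smul, smul_eq_mul, trace_sum_smul_mul, dotProduct_comm]
  rfl

lemma KKTStationary.gradient_eq (hstat : KKTStationary K L g x Λ) :
    g = -fun k ↦ ((K k + deltaMat L k x) * Λ).trace := by
  rw [KKTStationary, add_assoc] at hstat
  rw [eq_neg_of_add_eq_zero_left hstat]
  ext k
  simp [add_mul, trace_deltaMat_mul, Pi.single_apply]

lemma KKTStationary.trace_neg_sum_smul_mul (hstat : KKTStationary K L g x Λ) (b : Fin n → ℝ) :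
    (-(∑ k, b k • (K k + deltaMat L k x)) * Λ).trace = b ⬝ᵥ g := by
  rw [neg_mul, trace_neg, trace_sum_smul_mul, hstat.gradient_eq, dotProduct_neg]

lemma KKTStationary.trace_mul_lambdaMin_le_vecNorm (hstat : KKTStationary K L g x Λ)
    (hΛ : Λ.PosSemidef) {b : Fin n → ℝ} (hb : vecNorm b = 1) :
    Λ.trace * lambdaMin (-(∑ k, b k • (K k + deltaMat L k x))) ≤ vecNorm g := calc
  _ ≤ (-(∑ k, b k • (K k + deltaMat L k x)) * Λ).trace := trace_mul_lambdaMin_le _ hΛ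
  _ = b ⬝ᵥ g := hstat.trace_neg_sum_smul_mul b
  _ ≤ vecNorm b * vecNorm g := dotProduct_le_vecNorm_mul_vecNorm b g
  _ = vecNorm g := by rw [hb, one_mul]

theorem bmi_trace_bound_kkt_general (hn : 0 < n) (hΛ : Λ.PosSemidef)
    (hstat : KKTStationary K L g x Λ) : Λ.trace * sFun K L x ≤ vecNorm g := by
  rw [sFun, ← smul_eq_mul, ← Real.sSup_smul_of_nonneg hΛ.trace_nonneg]
  refine csSup_le (Set.Nonempty.smul_set ⟨_, Pi.single ⟨0, hn⟩ 1, vecNorm_single_one _, rfl⟩) ?_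
  rintro _ ⟨_, ⟨b, hb, rfl⟩, rfl⟩
  exact hstat.trace_mul_lambdaMin_le_vecNorm hΛ hb

end Stationarity

theorem bmi_trace_bound_kkt {n m : ℕ} (hn : 0 < n) (hm : 0 < m)
    (F0 : Matrix (Fin m) (Fin m) ℝ)
    (K : Fin n → Matrix (Fin m) (Fin m) ℝ)
    (L : Fin n → Fin n → Matrix (Fin m) (Fin m) ℝ)
    (hF0 : F0.IsSymm) (hK : ∀ k, (K k).IsSymm)
    (hL : ∀ i j, (L i j).IsSymm) (hLsy : ∀ i j, L i j = L j i)
    (c xc : Fin n → ℝ)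
    (η : ℝ) (hη : 0 < η)
    (xs : Fin n → ℝ) (hxs : xs ∈ feasSet F0 K L)
    (Λ : Matrix (Fin m) (Fin m) ℝ)
    (hKKT : KKT F0 K L c xc η xs Λ) :
    Λ.trace * sFun K L xs ≤ vecNorm c + 2 * η * vecNorm (xs - xc) := by
  obtain ⟨-, hΛ, hstat, -⟩ := hKKT
  exact (bmi_trace_bound_kkt_general hn hΛ hstat).trans
    (vecNorm_add_smul_le (by positivity) c (xs - xc))
end
end
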